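/- For every μ ∈ 𝓜(H) (H ⊂ ℂ^n compact, ν a positive Borel measure on H with ν(H) ≤ 1): J(μ) ≤ W(μ) ≤ inf{ δ̄^{e^{−Q}}(H) · exp(∫_H Q dμ) : Q : H → ℝ continuous }. -/

import Mathlib

open MeasureTheory Filter Topology ENNReal

noncomputable section

/-- Points of `ℂⁿ` (with the Euclidean metric). -/
abbrev Pt (n : ℕ) := EuclideanSpace ℂ (Fin n)

instance Pt.measurableSpace (n : ℕ) : MeasurableSpace (Pt n) := borel _

instance Pt.borelSpace (n : ℕ) : BorelSpace (Pt n) := ⟨rfl⟩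

/-- `s(d) = binomial(d+n, n)`, the number of multi-indices `α ∈ ℕⁿ` with `|α| ≤ d`. -/
def sdim (n d : ℕ) : ℕ := (d + n).choose n

lemma sdim_pos (n d : ℕ) : 0 < sdim n d := Nat.choose_pos (Nat.le_add_left n d)

/-- `E` is an enumeration of the multi-indices `α ∈ ℕⁿ` with `|α| ≤ d`. -/
def IsEnum (n d : ℕ) (E : Fin (sdim n d) → (Fin n → ℕ)) : Prop :=
  Function.Injective E ∧ ∀ α : Fin n → ℕ, ((∑ i, α i) ≤ d ↔ α ∈ Set.range E)

/-- The Vandermonde determinant `VDM_d(a_1, …, a_{s(d)}) = det [a_j^{α_i}]`. -/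
def VDM (n d : ℕ) (E : Fin (sdim n d) → (Fin n → ℕ))
    (a : Fin (sdim n d) → Pt n) : ℂ :=
  Matrix.det (Matrix.of fun i j => ∏ k, (a j k) ^ (E i k))

/-- `|VDM_d^Q(a)| = |VDM_d(a)| · w(a_1)^d ⋯ w(a_s)^d` where `w = e^{-Q}`, as a member
of `ℝ≥0∞`. -/
def absVDMQ (n d : ℕ) (E : Fin (sdim n d) → (Fin n → ℕ)) (H : Set (Pt n)) (Q : H → ℝ)
    (a : Fin (sdim n d) → H) : ℝ≥0∞ :=
  ENNReal.ofReal (‖VDM n d E (fun j => (a j : Pt n))‖ *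
    ∏ j, Real.exp (-(d : ℝ) * Q (a j)))

/-- The empirical measure `(1/s) ∑_j δ_{a_j}` of a tuple of points. -/
def emp {X : Type*} [MeasurableSpace X] {s : ℕ} (a : Fin s → X) : Measure X :=
  ((s : ℝ≥0∞))⁻¹ • ∑ j, Measure.dirac (a j)

lemma emp_univ {X : Type*} [MeasurableSpace X] {s : ℕ} (hs : s ≠ 0) (a : Fin s → X) :
    emp a Set.univ = 1 := by
  have : (emp a) Set.univ = ((s : ℝ≥0∞))⁻¹ * ∑ j : Fin s, (Measure.dirac (a j)) Set.univ := by
    simp [emp, Measure.smul_apply, Measure.finset_sum_apply]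
  rw [this]
  simp only [measure_univ, Finset.sum_const, Finset.card_univ, Fintype.card_fin, nsmul_eq_mul,
    mul_one]
  exact ENNReal.inv_mul_cancel (by exact_mod_cast hs) (by simp)

/-- The empirical probability measure `(1/s) ∑_j δ_{a_j}` of a tuple of points. -/
def empPM {X : Type*} [MeasurableSpace X] {s : ℕ} (hs : s ≠ 0) (a : Fin s → X) :
    ProbabilityMeasure X := ⟨emp a, ⟨emp_univ hs a⟩⟩

/-- `G̃_s(μ)`: the tuples in `H^s` whose empirical measure lies in `G`. -/
def Gtilde {n : ℕ} (d : ℕ) (H : Set (Pt n)) (G : Set (ProbabilityMeasure H)) :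
    Set (Fin (sdim n d) → H) :=
  {a | empPM (sdim_pos n d).ne' a ∈ G}

/-- `J_d^Q(μ, G) = (∫_{G̃_s(μ)} |VDM_d^Q(a)|² dν^{⊗s}(a))^{1/(2ds)}`. -/
def Jd (n d : ℕ) (E : Fin (sdim n d) → (Fin n → ℕ)) (H : Set (Pt n)) (ν : Measure H)
    (Q : H → ℝ) (G : Set (ProbabilityMeasure H)) : ℝ≥0∞ :=
  (∫⁻ a in Gtilde d H G, (absVDMQ n d E H Q a) ^ 2
      ∂(Measure.pi fun _ : Fin (sdim n d) => ν)) ^ (1 / (2 * d * sdim n d) : ℝ)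

/-- `W_d^Q(μ, G) = sup { |VDM_d^Q(a)|^{1/(ds)} : a ∈ G̃_s(μ) }`. -/
def Wd (n d : ℕ) (E : Fin (sdim n d) → (Fin n → ℕ)) (H : Set (Pt n))
    (Q : H → ℝ) (G : Set (ProbabilityMeasure H)) : ℝ≥0∞ :=
  ⨆ a ∈ Gtilde d H G, (absVDMQ n d E H Q a) ^ (1 / (d * sdim n d) : ℝ)

/-- `J^Q(μ) = inf_{G ∋ μ} limsup_{d → ∞} J_d^Q(μ, G)`, the infimum being over all open
neighborhoods `G` of `μ` in `𝓜(H)`. -/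
def JQ (n : ℕ) (E : ∀ d, Fin (sdim n d) → (Fin n → ℕ)) (H : Set (Pt n)) (ν : Measure H)
    (Q : H → ℝ) (μ : ProbabilityMeasure H) : ℝ≥0∞ :=
  ⨅ G ∈ {G : Set (ProbabilityMeasure H) | IsOpen G ∧ μ ∈ G},
    limsup (fun d => Jd n d (E d) H ν Q G) atTop

/-- `W^Q(μ) = inf_{G ∋ μ} limsup_{d → ∞} W_d^Q(μ, G)`, the infimum being over all open
neighborhoods `G` of `μ` in `𝓜(H)`. -/
def WQ (n : ℕ) (E : ∀ d, Fin (sdim n d) → (Fin n → ℕ)) (H : Set (Pt n))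
    (Q : H → ℝ) (μ : ProbabilityMeasure H) : ℝ≥0∞ :=
  ⨅ G ∈ {G : Set (ProbabilityMeasure H) | IsOpen G ∧ μ ∈ G},
    limsup (fun d => Wd n d (E d) H Q G) atTop

/-- `δ̄^w(H) = lim sup_d (sup_{a ∈ H^{s(d)}} |VDM_d^Q(a)|)^{1/(d·s(d))}` where `w = e^{-Q}`. -/
def deltaBar (n : ℕ) (E : ∀ d, Fin (sdim n d) → (Fin n → ℕ)) (H : Set (Pt n))
    (Q : H → ℝ) : ℝ≥0∞ :=
  limsup (fun d => (⨆ a : Fin (sdim n d) → H, absVDMQ n d (E d) H Q a)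
    ^ (1 / (d * sdim n d) : ℝ)) atTop

/-- The density condition on `(H, ν)`: there is `T > 0` such that for every `z₀ ∈ H`
there is `r(z₀) > 0` with `ν(B(z₀,r)) ≥ r^T` for all `0 < r < r(z₀)`. -/
def DensityCond {n : ℕ} (H : Set (Pt n)) (ν : Measure H) : Prop :=
  ∃ T : ℝ, 0 < T ∧ ∀ z₀ : H, ∃ r₀ > 0, ∀ r : ℝ, 0 < r → r < r₀ →
    ENNReal.ofReal (r ^ T) ≤ ν (Metric.ball z₀ r)

lemma Jd_le_Wd (n d : ℕ) (hd : 1 ≤ d) (E : Fin (sdim n d) → (Fin n → ℕ)) (H : Set (Pt n))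
    (ν : Measure H) (hν : ν Set.univ ≤ 1) (Q : H → ℝ) (G : Set (ProbabilityMeasure H)) :
    Jd n d E H ν Q G ≤ Wd n d E H Q G := by
  have : IsFiniteMeasure ν := ⟨lt_of_le_of_lt hν ENNReal.one_lt_top⟩
  have hd' : (0 : ℝ) < d := by exact_mod_cast hd
  have hs' : (0 : ℝ) < sdim n d := by exact_mod_cast sdim_pos n d
  have hp : (0 : ℝ) < d * sdim n d := mul_pos hd' hs'
  set W := Wd n d E H Q G with hW
  have key : ∀ a ∈ Gtilde d H G, (absVDMQ n d E H Q a) ^ 2 ≤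
      W ^ ((2 : ℝ) * d * sdim n d) := by
    intro a ha
    have h1 : (absVDMQ n d E H Q a) ^ (1 / (d * sdim n d) : ℝ) ≤ W :=
      le_iSup₂_of_le (f := fun a (_ : a ∈ Gtilde d H G) =>
        (absVDMQ n d E H Q a) ^ (1 / (d * sdim n d) : ℝ)) a ha le_rfl
    have h2 := ENNReal.rpow_le_rpow h1 (z := (2 : ℝ) * d * sdim n d) (by positivity)
    rw [← ENNReal.rpow_mul] at h2
    have h3 : (1 / (d * sdim n d) : ℝ) * ((2 : ℝ) * d * sdim n d) = ((2 : ℕ) : ℝ) := by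
      field_simp; norm_num
    rw [h3, ENNReal.rpow_natCast] at h2
    exact h2
  have h4 : ∫⁻ a in Gtilde d H G, (absVDMQ n d E H Q a) ^ 2
      ∂(Measure.pi fun _ : Fin (sdim n d) => ν) ≤ W ^ ((2 : ℝ) * d * sdim n d) := by
    refine (setLIntegral_mono measurable_const key).trans ?_
    rw [setLIntegral_const]
    refine mul_le_of_le_one_right' ((measure_mono (Set.subset_univ _)).trans ?_)
    rw [Measure.pi_univ]
    exact Finset.prod_le_one' fun _ _ => hν
  unfold Jd
  refine (ENNReal.rpow_le_rpow h4 (by positivity)).trans ?_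
  rw [← ENNReal.rpow_mul]
  have h5 : ((2 : ℝ) * d * sdim n d) * (1 / (2 * d * sdim n d) : ℝ) = 1 := by field_simp
  rw [h5, ENNReal.rpow_one]

lemma integral_empPM {X : Type*} [TopologicalSpace X] [MeasurableSpace X] [BorelSpace X]
    [CompactSpace X] {s : ℕ} (hs : s ≠ 0) (a : Fin s → X) (Q : X → ℝ) (hQ : Continuous Q) :
    (s : ℝ) * ∫ z, Q z ∂(empPM hs a : Measure X) = ∑ j, Q (a j) := by
  have e : (empPM hs a : Measure X) = ((s : ℝ≥0∞))⁻¹ • ∑ j, Measure.dirac (a j) := rfl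
  rw [e, integral_smul_measure, integral_finset_sum_measure]
  · have : (s : ℝ) ≠ 0 := by exact_mod_cast hs
    simp only [integral_dirac' _ _ hQ.stronglyMeasurable]
    simp [this]
  · intro i _
    exact integrable_dirac' hQ.stronglyMeasurable (by simp)

lemma Wd_le (n d : ℕ) (hd : 1 ≤ d) (E : Fin (sdim n d) → (Fin n → ℕ)) (H : Set (Pt n))
    (hH : IsCompact H) (Q : H → ℝ) (hQ : Continuous Q) (c : ℝ) :
    Wd n d E H 0 {σ | ∫ z, Q z ∂(σ : Measure H) < c} ≤
      ENNReal.ofReal (Real.exp c) *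
        (⨆ a : Fin (sdim n d) → H, absVDMQ n d E H Q a) ^ (1 / (d * sdim n d) : ℝ) := by
  have : CompactSpace H := isCompact_iff_compactSpace.mp hH
  have hd' : (0 : ℝ) < d := by exact_mod_cast hd
  have hs' : (0 : ℝ) < sdim n d := by exact_mod_cast sdim_pos n d
  have hp : (0 : ℝ) < d * sdim n d := mul_pos hd' hs'
  refine iSup₂_le fun a ha => ?_
  have ha' : ∫ z, Q z ∂(empPM (sdim_pos n d).ne' a : Measure H) < c := ha
  have hi := integral_empPM (sdim_pos n d).ne' a Q hQ
  have hsum : (d : ℝ) * ∑ j, Q (a j) ≤ c * (d * sdim n d) := by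
    rw [← hi]
    have := mul_le_mul_of_nonneg_left ha'.le hp.le
    linarith
  have h1 : absVDMQ n d E H 0 a ≤ ENNReal.ofReal (Real.exp c) ^ ((d : ℝ) * sdim n d) *
      absVDMQ n d E H Q a := by
    unfold absVDMQ
    rw [ENNReal.ofReal_rpow_of_pos (Real.exp_pos c), ← ENNReal.ofReal_mul (by positivity),
      ← Real.exp_mul]
    refine ENNReal.ofReal_le_ofReal ?_
    rw [← Real.exp_sum, ← Real.exp_sum, mul_left_comm, ← Real.exp_add]
    refine mul_le_mul_of_nonneg_left (Real.exp_le_exp.mpr ?_) (norm_nonneg _)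
    rw [← Finset.mul_sum, ← Finset.mul_sum]
    simp
    linarith
  refine (ENNReal.rpow_le_rpow (h1.trans (mul_le_mul_right (le_iSup _ a) _))
    (by positivity)).trans ?_
  rw [ENNReal.mul_rpow_of_nonneg _ _ (by positivity), ← ENNReal.rpow_mul,
    mul_one_div_cancel hp.ne', ENNReal.rpow_one]

/-- **Proposition (upper bound).** For every `μ ∈ 𝓜(H)` (`H ⊂ ℂⁿ` compact, `ν` a positive
Borel measure on `H` with `ν(H) ≤ 1`):
`J(μ) ≤ W(μ) ≤ inf { δ̄^{e^{-Q}}(H) · exp(∫_H Q dμ) : Q : H → ℝ continuous }`. -/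
theorem J_le_W_le_inf_weighted_transfinite
    (n : ℕ) (hn : 1 ≤ n)
    (E : ∀ d, Fin (sdim n d) → (Fin n → ℕ)) (hE : ∀ d, IsEnum n d (E d))
    (H : Set (Pt n)) (hHcomp : IsCompact H)
    (ν : Measure H) (hν : ν Set.univ ≤ 1)
    (μ : ProbabilityMeasure H) :
    JQ n E H ν 0 μ ≤ WQ n E H 0 μ ∧
    WQ n E H 0 μ ≤
      ⨅ (Q : H → ℝ) (_ : Continuous Q),
        deltaBar n E H Q * ENNReal.ofReal (Real.exp (∫ z, Q z ∂(μ : Measure H))) := by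
  refine ⟨?_, ?_⟩
  · refine iInf₂_mono fun G _ => limsup_le_limsup ?_
    filter_upwards [eventually_ge_atTop 1] with d hd
    exact Jd_le_Wd n d hd (E d) H ν hν 0 G
  · refine le_iInf₂ fun Q hQ => ?_
    have : CompactSpace H := isCompact_iff_compactSpace.mp hHcomp
    have step : ∀ ε : ℝ, 0 < ε → WQ n E H 0 μ ≤ deltaBar n E H Q *
        ENNReal.ofReal (Real.exp (∫ z, Q z ∂(μ : Measure H) + ε)) := by
      intro ε hε
      set c := ∫ z, Q z ∂(μ : Measure H) + ε with hc
      have hcont : Continuous fun σ : ProbabilityMeasure H => ∫ z, Q z ∂(σ : Measure H) :=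
        ProbabilityMeasure.continuous_integral_boundedContinuousFunction
          (BoundedContinuousFunction.mkOfCompact ⟨Q, hQ⟩)
      have hopen : IsOpen {σ : ProbabilityMeasure H | ∫ z, Q z ∂(σ : Measure H) < c} :=
        isOpen_lt hcont continuous_const
      have hmem : ∫ z, Q z ∂(μ : Measure H) < c := by linarith
      refine (iInf₂_le _ ⟨hopen, hmem⟩).trans ?_
      · rw [mul_comm, deltaBar, ← ENNReal.limsup_const_mul_of_ne_top ENNReal.ofReal_ne_top]
        refine limsup_le_limsup ?_
        filter_upwards [eventually_ge_atTop 1] with d hd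
        exact Wd_le n d hd (E d) H hHcomp Q hQ c
    have hlim : Tendsto (fun ε : ℝ => deltaBar n E H Q *
        ENNReal.ofReal (Real.exp (∫ z, Q z ∂(μ : Measure H) + ε))) (𝓝[>] 0)
        (𝓝 (deltaBar n E H Q * ENNReal.ofReal (Real.exp (∫ z, Q z ∂(μ : Measure H))))) := by
      refine ENNReal.Tendsto.const_mul ?_ (Or.inl ?_)
      · have : Continuous fun ε : ℝ =>
            ENNReal.ofReal (Real.exp (∫ z, Q z ∂(μ : Measure H) + ε)) :=
          ENNReal.continuous_ofReal.comp (by fun_prop)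
        have h := (this.tendsto 0).mono_left (nhdsWithin_le_nhds (s := Set.Ioi 0))
        simpa using h
      · simp [Real.exp_pos]
    refine ge_of_tendsto hlim ?_
    filter_upwards [self_mem_nhdsWithin] with ε hε
    exact step ε hε

end
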